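/- (Dunford–Pettis) Let (Ω, ℱ, ℙ) be a probability space. A subset A of L^1(Ω, ℱ, ℙ) is relatively compact for the weak topology σ(L^1, L^∞) if and only if A is uniformly integrable. -/

import Mathlib

open MeasureTheory Filter
open scoped ENNReal

/-- The weak topology `σ(L^p, L^q)` on `L^p`, i.e. the topology induced by the family of
functionals `f ↦ ∫ f g dμ` for `g ∈ L^q`. -/
noncomputable def weakLpTopology {Ω : Type*} [MeasurableSpace Ω] (μ : Measure Ω)
    (p q : ℝ≥0∞) : TopologicalSpace (Lp ℝ p μ) :=
  TopologicalSpace.induced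
    (fun f : Lp ℝ p μ => (fun g : Lp ℝ q μ => ∫ ω, f ω * g ω ∂μ)) Pi.topologicalSpace

/-- `A ⊆ L^p` is relatively compact for the weak topology `σ(L^p, L^q)`. -/
noncomputable def WeaklyRelativelyCompact {Ω : Type*} [MeasurableSpace Ω] (μ : Measure Ω)
    (p q : ℝ≥0∞) (A : Set (Lp ℝ p μ)) : Prop :=
  @IsCompact _ (weakLpTopology μ p q) (@closure _ (weakLpTopology μ p q) A)

/-- A set `A ⊆ L^1` is uniformly integrable:
`sup_{f ∈ A} E[|f| · 1_{|f| > c}] → 0` as `c → ∞`. -/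
def UnifIntegrableSet {Ω : Type*} [MeasurableSpace Ω] (μ : Measure Ω)
    (A : Set (Lp ℝ 1 μ)) : Prop :=
  ∀ ε : ℝ, 0 < ε → ∃ c : ℝ, ∀ f ∈ A, ∫ ω in {ω | c < |f ω|}, |f ω| ∂μ ≤ ε

/-!
Through the isometric embedding of `L¹` into the dual of `L^∞`, the topology `σ(L¹, L^∞)` is induced
by the weak-* topology, so `A` is weakly relatively compact if and only if its weak-* closure is
compact and consists of elements of `L¹`.

If `A` is uniformly integrable, truncating at a high level puts `A` within `ε` of a ball of `L²`,
whose image is weak-* compact. By Banach–Alaoglu, the weak-* closure of `A` is then compact and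
lies within `ε` of `L¹`; as `L¹` is norm closed in the dual, it lies in `L¹`.

If `A` is weakly relatively compact but not uniformly integrable, there are `f j ∈ A` and sets
`U j`, decreasing and with measure tending to zero, such that `ε ≤ ∫_{U j} |f j|`. As the `f j` are
bounded in `L¹`, there are `n` and a subsequence `f (φ i)` such that almost all the mass of
`f (φ i)` on `U n` lies in `U (ψ i) \ U (ψ (i + 1))`. These layers are disjoint, so the signs of
the `f (φ i)` on them can be glued to one function `g` with `ε / 2 ≤ ∫_{U (ψ N)} f (φ i) g` for all
`i ≥ N`. A weak cluster point inherits this bound for every `N`, although its integrals over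
`U (ψ N)` must tend to zero.
-/

open Topology Metric Set
open scoped Pointwise

theorem isCompact_closure_iff_of_isInducing {X Y : Type*} [TopologicalSpace X]
    [TopologicalSpace Y] [T2Space Y] {Φ : X → Y} (hΦ : IsInducing Φ) {A : Set X} :
    IsCompact (closure A) ↔ IsCompact (closure (Φ '' A)) ∧ closure (Φ '' A) ⊆ range Φ := by
  constructor
  · intro hA
    have hK : IsCompact (Φ '' closure A) := hA.image hΦ.continuous
    have hAK : Φ '' A ⊆ Φ '' closure A := image_mono subset_closure
    exact ⟨hK.closure_of_subset hAK,
      (closure_minimal hAK hK.isClosed).trans (image_subset_range Φ _)⟩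
  · rintro ⟨hcompact, hrange⟩
    rwa [hΦ.closure_eq_preimage_closure_image, hΦ.isCompact_iff,
      image_preimage_eq_of_subset hrange]

section WeakDual

variable {𝕜 E F H : Type*} [RCLike 𝕜] [NormedAddCommGroup E] [NormedSpace 𝕜 E]
  [NormedAddCommGroup F] [NormedSpace 𝕜 F] [NormedAddCommGroup H] [InnerProductSpace 𝕜 H]
  [CompleteSpace H]

theorem closure_toWeakDual_image_subset_add_closedBall (ι : E →ₗᵢ[𝕜] StrongDual 𝕜 F)
    {A K : Set E} {ε : ℝ} (hK : IsCompact ((fun x ↦ (ι x).toWeakDual) '' K))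
    (hAK : A ⊆ K + closedBall 0 ε) :
    closure ((fun x ↦ (ι x).toWeakDual) '' A) ⊆
      (fun x ↦ (ι x).toWeakDual) '' K + WeakDual.toStrongDual ⁻¹' closedBall 0 ε := by
  refine closure_minimal ?_ (hK.add (WeakDual.isCompact_closedBall 0 ε)).isClosed
  rintro _ ⟨x, hx, rfl⟩
  obtain ⟨y, hy, z, hz, rfl⟩ := hAK hx
  refine ⟨_, mem_image_of_mem _ hy, (ι z).toWeakDual, ?_, by simp⟩
  simpa using hz

theorem isCompact_closure_toWeakDual_image_of_forall_subset_add_closedBall [CompleteSpace E]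
    (ι : E →ₗᵢ[𝕜] StrongDual 𝕜 F) {A : Set E}
    (hA : ∀ ε > 0, ∃ K : Set E, IsCompact ((fun x ↦ (ι x).toWeakDual) '' K) ∧
      A ⊆ K + closedBall 0 ε) :
    IsCompact (closure ((fun x ↦ (ι x).toWeakDual) '' A)) ∧
      closure ((fun x ↦ (ι x).toWeakDual) '' A) ⊆ range fun x ↦ (ι x).toWeakDual := by
  constructor
  · obtain ⟨K, hK, hAK⟩ := hA 1 one_pos
    exact (hK.add (WeakDual.isCompact_closedBall 0 1)).closure_of_subset
      (subset_closure.trans (closure_toWeakDual_image_subset_add_closedBall ι hK hAK))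
  · intro T hT
    have hclosed : IsClosed (range ι) := ι.isometry.isClosedEmbedding.isClosed_range
    have hmem : T.toStrongDual ∈ closure (range ι) := by
      refine mem_closure_iff_nhds_basis nhds_basis_closedBall |>.2 fun ε hε ↦ ?_
      obtain ⟨K, hK, hAK⟩ := hA ε hε
      obtain ⟨_, ⟨x, -, rfl⟩, R, hR, rfl⟩ :=
        closure_toWeakDual_image_subset_add_closedBall ι hK hAK hT
      refine ⟨ι x, mem_range_self x, ?_⟩
      simpa using hR
    obtain ⟨x, hx⟩ := hclosed.closure_eq ▸ hmem
    exact ⟨x, congrArg StrongDual.toWeakDual hx⟩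

theorem isCompact_toWeakDual_toDual_comp_image_closedBall (S : F →L[𝕜] H) (r : ℝ) :
    IsCompact ((fun h ↦ StrongDual.toWeakDual ((InnerProductSpace.toDual 𝕜 H h).comp S)) ''
      closedBall (0 : H) r) := by
  let precompS : WeakDual 𝕜 H → WeakDual 𝕜 F :=
    fun T ↦ StrongDual.toWeakDual (T.toStrongDual.comp S)
  have hcont : Continuous precompS :=
    WeakDual.continuous_of_continuous_eval fun g ↦ WeakDual.eval_continuous (S g)
  convert (WeakDual.isCompact_closedBall (𝕜 := 𝕜) (E := H) 0 r).image hcont using 1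
  ext T
  constructor
  · rintro ⟨h, hh, rfl⟩
    exact ⟨StrongDual.toWeakDual (InnerProductSpace.toDual 𝕜 H h), by simpa using hh, rfl⟩
  · rintro ⟨R, hR, rfl⟩
    exact ⟨(InnerProductSpace.toDual 𝕜 H).symm R.toStrongDual, by simpa using hR,
      by simp [precompS]⟩

end WeakDual

theorem measurable_coe_sign : Measurable fun x : ℝ ↦ (SignType.sign x : ℝ) :=
  Monotone.measurable fun x y hxy ↦ by
    have h := SignType.sign.monotone hxy
    revert h
    cases SignType.sign x <;> cases SignType.sign y <;> simp

theorem abs_coe_sign_le_one (x : ℝ) : |(SignType.sign x : ℝ)| ≤ 1 := by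
  cases SignType.sign x <;> simp

section Duality

variable {Ω : Type*} [MeasurableSpace Ω] {μ : Measure Ω}

theorem isInducing_toWeakDual_lpPairing (μ : Measure Ω) (p q : ℝ≥0∞) [Fact (1 ≤ p)]
    [Fact (1 ≤ q)] [p.HolderConjugate q] :
    @IsInducing _ _ (weakLpTopology μ p q) _ fun f : Lp ℝ p μ ↦
      StrongDual.toWeakDual ((ContinuousLinearMap.mul ℝ ℝ).lpPairing μ p q f) := by
  let := weakLpTopology μ p q
  have hcoe : IsInducing fun (T : WeakDual ℝ (Lp ℝ q μ)) g ↦ T g := ⟨rfl⟩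
  refine hcoe.of_comp_iff.1 ⟨?_⟩
  unfold weakLpTopology
  congr 1
  ext f g
  simp [ContinuousLinearMap.lpPairing_eq_integral]

theorem lpPairing_mul_toLp {p q : ℝ≥0∞} [Fact (1 ≤ p)] [Fact (1 ≤ q)] [p.HolderConjugate q]
    (f : Lp ℝ p μ) {g : Ω → ℝ} (hg : MemLp g q μ) :
    (ContinuousLinearMap.mul ℝ ℝ).lpPairing μ p q f hg.toLp = ∫ ω, f ω * g ω ∂μ := by
  rw [ContinuousLinearMap.lpPairing_eq_integral]
  refine integral_congr_ae ?_
  filter_upwards [hg.coeFn_toLp] with ω hω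
  simp [hω]

theorem norm_lpPairing_mul_one_top_apply (f : Lp ℝ 1 μ) :
    ‖(ContinuousLinearMap.mul ℝ ℝ).lpPairing μ 1 ∞ f‖ = ‖f‖ := by
  apply le_antisymm
  · refine ContinuousLinearMap.opNorm_le_bound _ (norm_nonneg f) fun g ↦ ?_
    calc ‖(ContinuousLinearMap.mul ℝ ℝ).lpPairing μ 1 ∞ f g‖
        = ‖L1.integral ((ContinuousLinearMap.mul ℝ ℝ).holder 1 f g)‖ := by
          simp [ContinuousLinearMap.lpPairing, ← L1.integral_eq']
      _ ≤ ‖(ContinuousLinearMap.mul ℝ ℝ).holder 1 f g‖ := L1.norm_integral_le _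
      _ ≤ ‖ContinuousLinearMap.mul ℝ ℝ‖ * ‖f‖ * ‖g‖ :=
        ContinuousLinearMap.norm_holder_apply_apply_le _ f g
      _ ≤ ‖f‖ * ‖g‖ := by simp
  · have hmeas : AEStronglyMeasurable (fun ω ↦ (SignType.sign (f ω) : ℝ)) μ :=
      (measurable_coe_sign.comp (Lp.stronglyMeasurable f).measurable).aestronglyMeasurable
    have hbound : ∀ᵐ ω ∂μ, ‖(SignType.sign (f ω) : ℝ)‖ ≤ 1 :=
      .of_forall fun ω ↦ abs_coe_sign_le_one _
    have hmem := memLp_top_of_bound hmeas 1 hbound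
    have hnorm : ‖hmem.toLp‖ ≤ 1 := by
      rw [Lp.norm_toLp, eLpNorm_exponent_top]
      exact ENNReal.toReal_le_of_le_ofReal zero_le_one (eLpNormEssSup_le_of_ae_bound hbound)
    calc ‖f‖ = ∫ ω, f ω * SignType.sign (f ω) ∂μ := by
          simp [L1.norm_eq_integral_norm, self_mul_sign]
      _ = (ContinuousLinearMap.mul ℝ ℝ).lpPairing μ 1 ∞ f hmem.toLp :=
          (lpPairing_mul_toLp f hmem).symm
      _ ≤ ‖(ContinuousLinearMap.mul ℝ ℝ).lpPairing μ 1 ∞ f‖ * ‖hmem.toLp‖ :=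
          (le_abs_self _).trans (ContinuousLinearMap.le_opNorm (F := ℝ) _ _)
      _ ≤ ‖(ContinuousLinearMap.mul ℝ ℝ).lpPairing μ 1 ∞ f‖ :=
          mul_le_of_le_one_right (norm_nonneg _) hnorm

/-- The isometric embedding of `L¹` into the dual of `L^∞` given by `f ↦ (g ↦ ∫ f g)`. It
induces `σ(L¹, L^∞)` from the weak-* topology. -/
noncomputable def lpOneToDual (μ : Measure Ω) : Lp ℝ 1 μ →ₗᵢ[ℝ] StrongDual ℝ (Lp ℝ ∞ μ) where
  toLinearMap := ((ContinuousLinearMap.mul ℝ ℝ).lpPairing μ 1 ∞).toLinearMap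
  norm_map' := norm_lpPairing_mul_one_top_apply

theorem lpOneToDual_apply (f : Lp ℝ 1 μ) (g : Lp ℝ ∞ μ) :
    lpOneToDual μ f g = ∫ ω, f ω * g ω ∂μ :=
  ContinuousLinearMap.lpPairing_eq_integral _ f g

theorem lpOneToDual_toLp_apply (f : Lp ℝ 1 μ) {g : Ω → ℝ} (hg : MemLp g ∞ μ) :
    lpOneToDual μ f hg.toLp = ∫ ω, f ω * g ω ∂μ :=
  lpPairing_mul_toLp f hg

theorem weaklyRelativelyCompact_one_top_iff {A : Set (Lp ℝ 1 μ)} :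
    WeaklyRelativelyCompact μ 1 ∞ A ↔
      IsCompact (closure ((fun f ↦ StrongDual.toWeakDual (lpOneToDual μ f)) '' A)) ∧
        closure ((fun f ↦ StrongDual.toWeakDual (lpOneToDual μ f)) '' A) ⊆
          range fun f ↦ StrongDual.toWeakDual (lpOneToDual μ f) :=
  @isCompact_closure_iff_of_isInducing _ _ (weakLpTopology μ 1 ∞) _ _ _
    (isInducing_toWeakDual_lpPairing μ 1 ∞) A

end Duality

section UniformlyIntegrableToCompact

variable {Ω : Type*} [MeasurableSpace Ω] {μ : Measure Ω}

/-- The elements of `L¹` with a representative in the closed ball of radius `r` of `L²`: the weakly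
compact sets near which truncation puts a uniformly integrable set. Representatives are used because
`Lp` spaces of different exponents are distinct types. -/
def lpTwoClosedBall (μ : Measure Ω) (r : ℝ) : Set (Lp ℝ 1 μ) :=
  {f | ∃ h ∈ closedBall (0 : Lp ℝ 2 μ) r, f =ᵐ[μ] h}

variable [IsFiniteMeasure μ]

theorem isCompact_toWeakDual_lpOneToDual_image_lpTwoClosedBall (r : ℝ) :
    IsCompact ((fun f ↦ StrongDual.toWeakDual (lpOneToDual μ f)) '' lpTwoClosedBall μ r) := by
  let S : Lp ℝ ∞ μ →L[ℝ] Lp ℝ 2 μ :=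
    (ContinuousLinearMap.mul ℝ ℝ).holderL μ 2 ∞ 2 (Lp.const 2 μ 1)
  have hS (g : Lp ℝ ∞ μ) : S g =ᵐ[μ] g := by
    filter_upwards [(ContinuousLinearMap.mul ℝ ℝ).coeFn_holder (r := 2) (Lp.const 2 μ (1 : ℝ)) g,
      AEEqFun.coeFn_const Ω (1 : ℝ)] with ω hω hone
    simp [S, hω, hone]
  have heq {f : Lp ℝ 1 μ} {h : Lp ℝ 2 μ} (hfh : f =ᵐ[μ] h) :
      lpOneToDual μ f = (InnerProductSpace.toDual ℝ _ h).comp S := by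
    ext g
    rw [lpOneToDual_apply, ContinuousLinearMap.comp_apply, InnerProductSpace.toDual_apply_apply,
      L2.inner_def]
    refine integral_congr_ae ?_
    filter_upwards [hfh, hS g] with ω hω hSω
    simp [hω, hSω, mul_comm]
  convert isCompact_toWeakDual_toDual_comp_image_closedBall S r using 1
  ext T
  constructor
  · rintro ⟨f, ⟨h, hh, hfh⟩, rfl⟩
    exact ⟨h, hh, by simp [heq hfh]⟩
  · rintro ⟨h, hh, rfl⟩
    have hf := (Lp.memLp h).mono_exponent one_le_two |>.coeFn_toLp
    exact ⟨_, ⟨h, hh, hf⟩, by simp [heq hf]⟩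

theorem exists_mem_lpTwoClosedBall_norm_sub_eq_setIntegral (f : Lp ℝ 1 μ) (c : ℝ) :
    ∃ y ∈ lpTwoClosedBall μ (measureUnivNNReal μ ^ (2⁻¹ : ℝ) * |c|),
      ‖f - y‖ = ∫ ω in {ω | c < |f ω|}, |f ω| ∂μ := by
  have hf : Measurable f := (Lp.stronglyMeasurable f).measurable
  have hs : MeasurableSet {ω | c < |f ω|} := measurableSet_lt measurable_const hf.abs
  set s := {ω | c < |f ω|}
  have hbound (ω : Ω) : ‖sᶜ.indicator f ω‖ ≤ |c| := by
    by_cases hω : c < |f ω|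
    · simp [s, hω]
    · simpa [s, hω] using (not_lt.1 hω).trans (le_abs_self c)
  have hmem (p : ℝ≥0∞) : MemLp (sᶜ.indicator f) p μ :=
    .of_bound (hf.indicator hs.compl).aestronglyMeasurable |c| (.of_forall hbound)
  refine ⟨(hmem 1).toLp, ⟨(hmem 2).toLp, ?_, ?_⟩, ?_⟩
  · rw [mem_closedBall_zero_iff]
    refine (Lp.norm_le_of_ae_bound (abs_nonneg c) ?_).trans_eq (by simp)
    filter_upwards [(hmem 2).coeFn_toLp] with ω hω
    simpa only [hω] using hbound ω
  · exact (hmem 1).coeFn_toLp.trans (hmem 2).coeFn_toLp.symm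
  · rw [L1.norm_eq_integral_norm, ← integral_indicator hs]
    refine integral_congr_ae ?_
    filter_upwards [Lp.coeFn_sub f (hmem 1).toLp, (hmem 1).coeFn_toLp] with ω hsub hω
    rw [hsub, Pi.sub_apply, hω]
    by_cases hωs : ω ∈ s <;> simp [hωs]

theorem UnifIntegrableSet.weaklyRelativelyCompact {A : Set (Lp ℝ 1 μ)}
    (hA : UnifIntegrableSet μ A) : WeaklyRelativelyCompact μ 1 ∞ A := by
  refine weaklyRelativelyCompact_one_top_iff.2 <|
    isCompact_closure_toWeakDual_image_of_forall_subset_add_closedBall _ fun ε hε ↦ ?_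
  obtain ⟨c, hc⟩ := hA ε hε
  refine ⟨_, isCompact_toWeakDual_lpOneToDual_image_lpTwoClosedBall
    (measureUnivNNReal μ ^ (2⁻¹ : ℝ) * |c|), fun f hf ↦ ?_⟩
  obtain ⟨y, hy, hfy⟩ := exists_mem_lpTwoClosedBall_norm_sub_eq_setIntegral f c
  refine ⟨y, hy, f - y, ?_, by simp⟩
  simpa [hfy] using hc f hf

end UniformlyIntegrableToCompact

theorem exists_forall_frequently_sub_le {ι : Type*} {l : Filter ι} [l.NeBot] {a : ι → ℕ → ℝ}
    {M δ : ℝ} (hM : ∀ j n m, a j n - a j m ≤ M) (hδ : 0 < δ) :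
    ∃ n, ∀ m ≥ n, ∃ᶠ j in l, a j n - a j m ≤ δ := by
  by_contra! hdrop
  have hmany (k : ℕ) : ∃ m, ∀ᶠ j in l, k * δ ≤ a j 0 - a j m := by
    induction k with
    | zero => exact ⟨0, .of_forall fun j ↦ by simp⟩
    | succ k ih =>
      obtain ⟨n, hn⟩ := ih
      obtain ⟨m, -, hm⟩ := hdrop n
      refine ⟨m, ?_⟩
      filter_upwards [hn, hm] with j hjn hjm
      push_cast
      linarith
  obtain ⟨k, hk⟩ := exists_lt_nsmul hδ M
  obtain ⟨m, hm⟩ := hmany k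
  obtain ⟨j, hj⟩ := hm.exists
  rw [nsmul_eq_mul] at hk
  linarith [hM j 0 m]

theorem exists_strictMono_sub_le_and_le {a : ℕ → ℕ → ℝ} {M δ : ℝ}
    (hM : ∀ j n m, a j n - a j m ≤ M) (hlim : ∀ j, Tendsto (a j) atTop (𝓝 0)) (hδ : 0 < δ) :
    ∃ (n : ℕ) (φ ψ : ℕ → ℕ), StrictMono ψ ∧ ∀ i, n ≤ ψ i ∧ ψ i ≤ φ i ∧
      a (φ i) n - a (φ i) (ψ i) ≤ δ ∧ a (φ i) (ψ (i + 1)) ≤ δ := by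
  obtain ⟨n, hn⟩ := exists_forall_frequently_sub_le (l := atTop) hM hδ
  choose! J hJ_ge hJ using fun m hm ↦ frequently_atTop.1 (hn m hm) m
  obtain ⟨ψ, hψn, hψ⟩ := exists_seq_of_forall_finset_exists (n ≤ ·)
    (fun x y ↦ x < y ∧ a (J x) y ≤ δ) fun s _ ↦ by
      have hs : ∀ᶠ y in atTop, ∀ x ∈ s, x < y ∧ a (J x) y ≤ δ := s.eventually_all.2 fun x _ ↦
        (eventually_gt_atTop x).and ((hlim (J x)).eventually_le_const hδ)
      exact ((eventually_ge_atTop n).and hs).exists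
  exact ⟨n, J ∘ ψ, ψ, fun i j hij ↦ (hψ i j hij).1, fun i ↦
    ⟨hψn i, hJ_ge _ (hψn i), hJ _ (hψn i), (hψ i (i + 1) i.lt_succ_self).2⟩⟩

section GlidingHump

variable {Ω : Type*} [MeasurableSpace Ω] {μ : Measure Ω}

theorem two_mul_setIntegral_abs_sub_le_setIntegral_mul {F g : Ω → ℝ} {D V U : Set Ω}
    (hF : Integrable F μ) (hg : AEStronglyMeasurable g μ) (hg_le : ∀ ω, |g ω| ≤ 1)
    (hFg : ∀ ω ∈ D, F ω * g ω = |F ω|) (hD : MeasurableSet D) (hDV : D ⊆ V) (hVU : V ⊆ U) :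
    2 * ∫ ω in D, |F ω| ∂μ - ∫ ω in U, |F ω| ∂μ ≤ ∫ ω in V, F ω * g ω ∂μ := by
  have hmul : Integrable (fun ω ↦ F ω * g ω) μ := hF.mul_bdd hg (.of_forall hg_le)
  have hdiff : -∫ ω in V \ D, |F ω| ∂μ ≤ ∫ ω in V \ D, F ω * g ω ∂μ := by
    rw [← integral_neg]
    refine integral_mono hF.abs.neg.integrableOn hmul.integrableOn fun ω ↦ ?_
    refine neg_le_of_abs_le ?_
    rw [abs_mul]
    exact mul_le_of_le_one_right (abs_nonneg _) (hg_le ω)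
  rw [setIntegral_sdiff hD hF.abs.integrableOn hDV, setIntegral_sdiff hD hmul.integrableOn hDV,
    setIntegral_congr_fun hD hFg] at hdiff
  have hmono : ∫ ω in V, |F ω| ∂μ ≤ ∫ ω in U, |F ω| ∂μ :=
    setIntegral_mono_set hF.abs.integrableOn (.of_forall fun _ ↦ abs_nonneg _) hVU.eventuallyLE
  linarith

theorem exists_measurable_mul_eq_abs_of_pairwise_disjoint {ι : Type*} [Countable ι]
    [Nonempty ι] {f : ι → Ω → ℝ} {D : ι → Set Ω} (hf : ∀ i, Measurable (f i))
    (hD : ∀ i, MeasurableSet (D i)) (hdisj : Pairwise (Function.onFun Disjoint D)) :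
    ∃ g : Ω → ℝ, Measurable g ∧ (∀ ω, |g ω| ≤ 1) ∧ ∀ i, ∀ ω ∈ D i, f i ω * g ω = |f i ω| := by
  obtain ⟨F, hF, hFf⟩ := exists_measurable_piecewise D hD f hf
    fun i j hij ↦ by simp [(hdisj hij).inter_eq]
  exact ⟨fun ω ↦ SignType.sign (F ω), measurable_coe_sign.comp hF,
    fun ω ↦ abs_coe_sign_le_one (F ω), fun i ω hω ↦ by simp [hFf i hω, self_mul_sign]⟩

theorem exists_gliding_hump {f : ℕ → Ω → ℝ} {U : ℕ → Set Ω} {M ε : ℝ}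
    (hf : ∀ j, Measurable (f j)) (hint : ∀ j, Integrable (f j) μ)
    (hM : ∀ j, ∫ ω, |f j ω| ∂μ ≤ M) (hU : ∀ n, MeasurableSet (U n)) (hanti : Antitone U)
    (hμU : Tendsto (μ ∘ U) atTop (𝓝 0)) (hε : 0 < ε) (hfU : ∀ j, ε ≤ ∫ ω in U j, |f j ω| ∂μ) :
    ∃ (φ ψ : ℕ → ℕ) (g : Ω → ℝ), StrictMono ψ ∧ Measurable g ∧ (∀ ω, |g ω| ≤ 1) ∧
      ∀ N i, N ≤ i → ε / 2 ≤ ∫ ω in U (ψ N), f (φ i) ω * g ω ∂μ := by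
  let a (j n : ℕ) : ℝ := ∫ ω in U n, |f j ω| ∂μ
  have ha_nonneg (j n : ℕ) : 0 ≤ a j n := integral_nonneg fun _ ↦ abs_nonneg _
  have ha_le (j n : ℕ) : a j n ≤ M :=
    (setIntegral_le_integral (hint j).abs (.of_forall fun _ ↦ abs_nonneg _)).trans (hM j)
  have ha_anti (j : ℕ) : Antitone (a j) := fun n m hnm ↦
    setIntegral_mono_set (hint j).abs.integrableOn (.of_forall fun _ ↦ abs_nonneg _)
      (hanti hnm).eventuallyLE
  obtain ⟨n, φ, ψ, hψ, hhump⟩ := exists_strictMono_sub_le_and_le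
    (fun j n m ↦ (sub_le_self _ (ha_nonneg j m)).trans (ha_le j n))
    (fun j ↦ (hint j).abs.tendsto_setIntegral_nhds_zero hμU) (by positivity : 0 < ε / 8)
  let D (i : ℕ) : Set Ω := U (ψ i) \ U (ψ (i + 1))
  have hD (i : ℕ) : MeasurableSet (D i) := (hU _).diff (hU _)
  have hdisj : Pairwise (Function.onFun Disjoint D) := (pairwise_disjoint_on D).2 fun i j hij ↦
    disjoint_sdiff_left.mono_right (sdiff_subset.trans (hanti (hψ.monotone hij)))
  obtain ⟨g, hg, hg_le, hfg⟩ :=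
    exists_measurable_mul_eq_abs_of_pairwise_disjoint (fun i ↦ hf (φ i)) hD hdisj
  refine ⟨φ, ψ, g, hψ, hg, hg_le, fun N i hNi ↦ ?_⟩
  obtain ⟨hnψ, hψφ, hhead, htail⟩ := hhump i
  have hDi : ∫ ω in D i, |f (φ i) ω| ∂μ = a (φ i) (ψ i) - a (φ i) (ψ (i + 1)) :=
    setIntegral_sdiff (hU _) (hint _).abs.integrableOn (hanti (hψ.monotone i.le_succ))
  have hlarge : ε ≤ a (φ i) n := (hfU (φ i)).trans (ha_anti _ (hnψ.trans hψφ))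
  calc ε / 2 ≤ 2 * ∫ ω in D i, |f (φ i) ω| ∂μ - a (φ i) n := by linarith
    _ ≤ ∫ ω in U (ψ N), f (φ i) ω * g ω ∂μ :=
      two_mul_setIntegral_abs_sub_le_setIntegral_mul (hint _) hg.aestronglyMeasurable
        hg_le (hfg i) (hD i) (sdiff_subset.trans (hanti (hψ.monotone hNi))) (hanti (hhump N).1)

end GlidingHump

section CompactToUniformlyIntegrable

variable {Ω : Type*} [MeasurableSpace Ω] {μ : Measure Ω}

theorem eLpNorm_one_indicator_eq_ofReal_setIntegral_abs {f : Ω → ℝ} {s : Set Ω}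
    (hf : Integrable f μ) (hs : MeasurableSet s) :
    eLpNorm (s.indicator f) 1 μ = ENNReal.ofReal (∫ ω in s, |f ω| ∂μ) := by
  rw [eLpNorm_indicator_eq_eLpNorm_restrict hs, eLpNorm_one_eq_lintegral_enorm]
  exact (ofReal_integral_norm_eq_lintegral_enorm hf.integrableOn).symm

theorem exists_antitone_le_setIntegral_abs_of_not_unifIntegrable {ι : Type*} {f : ι → Ω → ℝ}
    (hf : ∀ i, Integrable (f i) μ) (hnot : ¬UnifIntegrable f 1 μ) :
    ∃ ε > 0, ∃ U : ℕ → Set Ω, (∀ n, MeasurableSet (U n)) ∧ Antitone U ∧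
      Tendsto (μ ∘ U) atTop (𝓝 0) ∧ ∀ n, ∃ i, ε ≤ ∫ ω in U n, |f i ω| ∂μ := by
  simp only [UnifIntegrable] at hnot
  push Not at hnot
  obtain ⟨ε, hε, hbad⟩ := hnot
  choose i s hs hμs hlarge using fun n : ℕ ↦ hbad ((1 / 2) ^ n) (by positivity)
  have hsummable : ∑' n, μ (s n) ≠ ∞ := by
    refine ne_top_of_le_ne_top ?_ (ENNReal.tsum_le_tsum hμs)
    exact summable_geometric_two.tsum_ofReal_ne_top
  refine ⟨ε, hε, fun n ↦ ⋃ k, s (k + n), fun n ↦ .iUnion fun k ↦ hs _, ?_, ?_, fun n ↦ ⟨i n, ?_⟩⟩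
  · refine fun n m hnm ↦ iUnion_subset fun k ↦ ?_
    convert subset_iUnion (fun k ↦ s (k + n)) (k + (m - n)) using 2
    lia
  · exact tendsto_of_tendsto_of_tendsto_of_le_of_le tendsto_const_nhds
      (ENNReal.tendsto_sum_nat_add _ hsummable) (fun _ ↦ zero_le) fun n ↦ measure_iUnion_le _
  · have hn := hlarge n
    rw [eLpNorm_one_indicator_eq_ofReal_setIntegral_abs (hf _) (hs _),
      ENNReal.ofReal_lt_ofReal_iff_of_nonneg hε.le] at hn
    refine hn.le.trans <| setIntegral_mono_set (hf _).abs.integrableOn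
      (.of_forall fun _ ↦ abs_nonneg _) (LE.le.eventuallyLE ?_)
    simpa using subset_iUnion (fun k ↦ s (k + n)) 0

variable {A : Set (Lp ℝ 1 μ)}

theorem WeaklyRelativelyCompact.isBounded (hA : WeaklyRelativelyCompact μ 1 ∞ A) :
    Bornology.IsBounded A := by
  have hcompact := (weaklyRelativelyCompact_one_top_iff.1 hA).1
  have hbounded := WeakDual.isBounded_iff_isVonNBounded.2 (hcompact.isVonNBounded ℝ)
  refine ((lpOneToDual μ).antilipschitz.isBounded_preimage
    (WeakDual.isBounded_toWeakDual_preimage_iff_isBounded.2 hbounded)).subset fun f hf ↦ ?_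
  exact subset_closure (mem_image_of_mem _ hf)

theorem WeaklyRelativelyCompact.exists_forall_le_integral {ι : Type*} {l : Filter ι} [l.NeBot]
    {u : ι → Lp ℝ 1 μ} (hA : WeaklyRelativelyCompact μ 1 ∞ A) (hu : ∀ i, u i ∈ A) :
    ∃ f : Lp ℝ 1 μ, ∀ {g : Ω → ℝ} {c : ℝ}, MemLp g ∞ μ →
      (∀ᶠ i in l, c ≤ ∫ ω, u i ω * g ω ∂μ) → c ≤ ∫ ω, f ω * g ω ∂μ := by
  obtain ⟨hcompact, hrange⟩ := weaklyRelativelyCompact_one_top_iff.1 hA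
  obtain ⟨T, hT, hcluster⟩ := hcompact.exists_mapClusterPt_of_frequently (l := l)
    (.of_forall fun i ↦ subset_closure (mem_image_of_mem _ (hu i)))
  obtain ⟨f, rfl⟩ := hrange hT
  refine ⟨f, fun {g c} hg hc ↦ ?_⟩
  have hclosed : IsClosed {T : WeakDual ℝ (Lp ℝ ∞ μ) | c ≤ T hg.toLp} :=
    isClosed_le continuous_const (WeakDual.eval_continuous _)
  have hmem := hclosed.mem_of_mapClusterPt hcluster <|
    hc.mono fun i hi ↦ hi.trans_eq (lpOneToDual_toLp_apply (u i) hg).symm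
  exact hmem.trans_eq (lpOneToDual_toLp_apply f hg)

theorem WeaklyRelativelyCompact.unifIntegrable (hA : WeaklyRelativelyCompact μ 1 ∞ A) :
    UnifIntegrable (fun f : A ↦ (f : Ω → ℝ)) 1 μ := by
  by_contra hnot
  obtain ⟨M, hM⟩ := hA.isBounded.exists_norm_le
  obtain ⟨ε, hε, U, hU, hanti, hμU, hlarge⟩ :=
    exists_antitone_le_setIntegral_abs_of_not_unifIntegrable
      (fun f : A ↦ L1.integrable_coeFn f.1) hnot
  choose f hf using hlarge
  obtain ⟨φ, ψ, g, hψ, hg, hg_le, hhump⟩ := exists_gliding_hump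
    (fun j ↦ (Lp.stronglyMeasurable (f j).1).measurable) (fun j ↦ L1.integrable_coeFn (f j).1)
    (fun j ↦ (L1.norm_eq_integral_norm (f j).1).symm.trans_le (hM _ (f j).2)) hU hanti hμU hε hf
  obtain ⟨f₀, hf₀⟩ := hA.exists_forall_le_integral (l := atTop) fun i ↦ (f (φ i)).2
  have hf₀_int : Integrable f₀ μ := L1.integrable_coeFn f₀
  have hf₀_large (N : ℕ) : ε / 2 ≤ ∫ ω in U (ψ N), |f₀ ω| ∂μ := by
    have hg_mem : MemLp ((U (ψ N)).indicator g) ∞ μ :=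
      (memLp_top_of_bound hg.aestronglyMeasurable 1 (.of_forall hg_le)).indicator (hU _)
    have hint_indicator (F : Ω → ℝ) :
        ∫ ω, F ω * (U (ψ N)).indicator g ω ∂μ = ∫ ω in U (ψ N), F ω * g ω ∂μ := by
      simp only [← integral_indicator (hU _), indicator_mul_right]
    have hlim : ε / 2 ≤ ∫ ω, f₀ ω * (U (ψ N)).indicator g ω ∂μ :=
      hf₀ hg_mem <| (eventually_ge_atTop N).mono fun i hi ↦
        (hhump N i hi).trans_eq (hint_indicator _).symm
    rw [hint_indicator] at hlim
    refine hlim.trans <| integral_mono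
      (hf₀_int.mul_bdd hg.aestronglyMeasurable (.of_forall hg_le)).integrableOn
      hf₀_int.abs.integrableOn fun ω ↦ (le_abs_self _).trans ?_
    rw [abs_mul]
    exact mul_le_of_le_one_right (abs_nonneg _) (hg_le ω)
  have hf₀_small := hf₀_int.abs.tendsto_setIntegral_nhds_zero (hμU.comp hψ.tendsto_atTop)
  linarith [ge_of_tendsto' hf₀_small hf₀_large]

theorem unifIntegrableSet_of_uniformIntegrable
    (hA : UniformIntegrable (fun f : A ↦ (f : Ω → ℝ)) 1 μ) : UnifIntegrableSet μ A := by
  intro ε hε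
  obtain ⟨c, hc⟩ := hA.spec one_ne_zero ENNReal.one_ne_top hε
  refine ⟨c, fun f hf ↦ ?_⟩
  have hf_int : Integrable f μ := L1.integrable_coeFn f
  have hs : MeasurableSet {ω | c ≤ ‖f ω‖₊} :=
    measurableSet_le measurable_const (Lp.stronglyMeasurable f).measurable.nnnorm
  have hle := hc ⟨f, hf⟩
  rw [eLpNorm_one_indicator_eq_ofReal_setIntegral_abs hf_int hs,
    ENNReal.ofReal_le_ofReal_iff hε.le] at hle
  refine (setIntegral_mono_set hf_int.abs.integrableOn (.of_forall fun _ ↦ abs_nonneg _)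
    (LE.le.eventuallyLE fun ω hω ↦ ?_)).trans hle
  exact le_of_lt (show (c : ℝ) < ‖f ω‖ from hω)

theorem WeaklyRelativelyCompact.unifIntegrableSet (hA : WeaklyRelativelyCompact μ 1 ∞ A) :
    UnifIntegrableSet μ A := by
  obtain ⟨M, hM⟩ := hA.isBounded.exists_norm_le
  refine unifIntegrableSet_of_uniformIntegrable
    ⟨fun f ↦ Lp.aestronglyMeasurable f.1, hA.unifIntegrable, M.toNNReal, fun f ↦ ?_⟩
  rw [← Lp.enorm_def, ← ofReal_norm]
  exact ENNReal.ofReal_le_ofReal (hM f f.2)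

end CompactToUniformlyIntegrable

theorem dunford_pettis_general {Ω : Type*} [MeasurableSpace Ω] (μ : Measure Ω)
    [IsFiniteMeasure μ] (A : Set (Lp ℝ 1 μ)) :
    WeaklyRelativelyCompact μ 1 ∞ A ↔ UnifIntegrableSet μ A :=
  ⟨WeaklyRelativelyCompact.unifIntegrableSet, UnifIntegrableSet.weaklyRelativelyCompact⟩

/-- **Dunford–Pettis.** A subset `A` of `L^1` over a probability space is relatively compact
for the weak topology `σ(L^1, L^∞)` iff it is uniformly integrable. -/
theorem dunford_pettis
    {Ω : Type*} [MeasurableSpace Ω] (μ : Measure Ω) [IsProbabilityMeasure μ]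
    (A : Set (Lp ℝ 1 μ)) :
    WeaklyRelativelyCompact μ 1 ∞ A ↔ UnifIntegrableSet μ A :=
  dunford_pettis_general μ A
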